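/- arXiv:math/0609774 — 2 statements merged into one kernel-verified Lean document; each statement's English description precedes it below -/
import Mathlib

section
/- Let m ≥ 0 be an integer, let d > 1 be an integer, and let L = L_{2d}^{(m)} = 2U ⊕ mE8(−1) ⊕ ⟨−2d⟩. Then the number of orbits of the stable orthogonal group Õ(L) on the set of primitive vectors r ∈ L with (r,r) = −2d and div(r) = d equals 2^{ρ(d)} if d is odd or d ≡ 4 (mod 8), equals 2^{ρ(d)+1} if d ≡ 0 (mod 8), and equals 2^{ρ(d)−1} if d ≡ 2 (mod 4), where ρ(d) is the number of distinct prime divisors of d. -/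
/-- The hyperbolic plane `U`, with Gram matrix `[[0,1],[1,0]]`. -/
def gramU : Matrix (Fin 2) (Fin 2) ℤ := !![0, 1; 1, 0]

/-- The Gram matrix of `E₈(−1)`: the negated Cartan (= Gram) matrix of the `E₈` root
lattice. -/
def gramE8neg : Matrix (Fin 8) (Fin 8) ℤ := -CartanMatrix.E₈

/-- The Gram matrix of `m` orthogonal copies of `E₈(−1)`. -/
def gramE8copies (m : ℕ) : Matrix (Fin m × Fin 8) (Fin m × Fin 8) ℤ :=
  Matrix.of fun p q => if p.1 = q.1 then gramE8neg p.2 q.2 else 0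

/-- Index set for `II_{2,8m+2} = 2U ⊕ mE₈(−1)`. -/
abbrev IdxII (m : ℕ) : Type := (Fin 2 ⊕ Fin 2) ⊕ Fin m × Fin 8

/-- The Gram matrix of the even unimodular lattice `II_{2,8m+2} = 2U ⊕ mE₈(−1)`. -/
def gramII (m : ℕ) : Matrix (IdxII m) (IdxII m) ℤ :=
  Matrix.fromBlocks (Matrix.fromBlocks gramU 0 0 gramU) 0 0 (gramE8copies m)

/-- Index set for `L_{2d}^{(m)} = 2U ⊕ mE₈(−1) ⊕ ⟨−2d⟩`. -/
abbrev IdxL (m : ℕ) : Type := IdxII m ⊕ Fin 1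

/-- The Gram matrix of `L_{2d}^{(m)} = 2U ⊕ mE₈(−1) ⊕ ⟨−2d⟩`. -/
def gramL (m d : ℕ) : Matrix (IdxL m) (IdxL m) ℤ :=
  Matrix.fromBlocks (gramII m) 0 0 !![-(2 * (d : ℤ))]

/-- The bilinear form on `ι → ℤ` associated to a Gram matrix `G`:
`⟨x, y⟩ = ∑ i j, x i * G i j * y j`. -/
def bilin {ι : Type} [Fintype ι] (G : Matrix ι ι ℤ) (x y : ι → ℤ) : ℤ :=
  ∑ i, ∑ j, x i * G i j * y j

/-- `r` is primitive: `ℚr ∩ L = ℤr`, equivalently `r` is not a nontrivial integer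
multiple of a lattice vector. -/
def IsPrim {ι : Type} (r : ι → ℤ) : Prop :=
  ∀ (k : ℤ) (x : ι → ℤ), r = k • x → IsUnit k

/-- `s = div(r)`: the positive generator of the ideal `{(r,l) : l ∈ L} ⊆ ℤ`. -/
def IsDivisorOf {ι : Type} [Fintype ι] (G : Matrix ι ι ℤ) (r : ι → ℤ) (s : ℤ) : Prop :=
  0 < s ∧ (∀ l : ι → ℤ, s ∣ bilin G r l) ∧ ∃ l : ι → ℤ, bilin G r l = s

/-- Two lattices, given as `ℤ`-modules with `ℤ`-valued bilinear forms, are isometric. -/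
def LatIsometric {M N : Type} [AddCommGroup M] [Module ℤ M] [AddCommGroup N] [Module ℤ N]
    (BM : M → M → ℤ) (BN : N → N → ℤ) : Prop :=
  ∃ e : M ≃ₗ[ℤ] N, ∀ x y : M, BN (e x) (e y) = BM x y

/-- The orthogonal complement `K_r = {x : (x,r) = 0}` of `r`, as a `ℤ`-submodule. -/
def orthC {ι : Type} [Fintype ι] (G : Matrix ι ι ℤ) (r : ι → ℤ) :
    Submodule ℤ (ι → ℤ) where
  carrier := {x | bilin G x r = 0}
  zero_mem' := by simp [bilin]
  add_mem' := by
    intro a b ha hb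
    simp only [Set.mem_setOf_eq, bilin, Pi.add_apply, add_mul, Finset.sum_add_distrib] at *
    rw [ha, hb, add_zero]
  smul_mem' := by
    intro c x hx
    simp only [Set.mem_setOf_eq, bilin, Pi.smul_apply, smul_eq_mul, mul_assoc,
      ← Finset.mul_sum] at *
    rw [hx, mul_zero]

/-- Componentwise embedding of the lattice `ι → ℤ` into `ι → ℚ` (i.e. into `L ⊗ ℚ`). -/
def castV {ι : Type} (x : ι → ℤ) : ι → ℚ := fun i => (x i : ℚ)

/-- The `ℚ`-bilinear extension of the form with Gram matrix `G` to `ι → ℚ`. -/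
def bilinQ {ι : Type} [Fintype ι] (G : Matrix ι ι ℤ) (x y : ι → ℚ) : ℚ :=
  ∑ i, ∑ j, x i * (G i j : ℚ) * y j

/-- `g` lies in the stable orthogonal group `Õ(L)` of the lattice `L = (ι → ℤ)` with
Gram matrix `G`:  `g` is an isometry of `L` whose `ℚ`-linear extension `g_ℚ` satisfies
`g_ℚ(y) − y ∈ L` for every `y` in the dual lattice `L^∨ ⊆ L ⊗ ℚ`.  (The condition
`g_ℚ(y) − y ∈ L` is expressed by clearing denominators: whenever `N • y = x` comes from
`x ∈ L`, one has `g x − x ∈ N • L`.) -/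
def InStableO {ι : Type} [Fintype ι] (G : Matrix ι ι ℤ)
    (g : (ι → ℤ) ≃ₗ[ℤ] (ι → ℤ)) : Prop :=
  (∀ x y, bilin G (g x) (g y) = bilin G x y) ∧
    ∀ y : ι → ℚ, (∀ l : ι → ℤ, ∃ a : ℤ, bilinQ G y (castV l) = (a : ℚ)) →
      ∀ (N : ℤ) (x : ι → ℤ), (N : ℚ) • y = castV x → ∃ l : ι → ℤ, g x - x = N • l

/-- The set of orbits of the stable orthogonal group `Õ(L)` on a set `S` of lattice
vectors. -/
def stableOrbits {ι : Type} [Fintype ι] (G : Matrix ι ι ℤ) (S : Set (ι → ℤ)) :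
    Set (Set (ι → ℤ)) :=
  {O | ∃ r ∈ S, O = {r' | ∃ g : (ι → ℤ) ≃ₗ[ℤ] (ι → ℤ), InStableO G g ∧ g r = r'}}


section General
variable {ι : Type} [Fintype ι] (G : Matrix ι ι ℤ)

theorem bilin_add_left (x y z : ι → ℤ) : bilin G (x + y) z = bilin G x z + bilin G y z := by
  simp [bilin, add_mul, Finset.sum_add_distrib]

theorem bilin_smul_left (k : ℤ) (x z : ι → ℤ) : bilin G (k • x) z = k * bilin G x z := by
  simp [bilin, Finset.mul_sum, mul_assoc]

theorem bilin_add_right (x y z : ι → ℤ) : bilin G x (y + z) = bilin G x y + bilin G x z := by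
  simp [bilin, mul_add, Finset.sum_add_distrib]

theorem bilin_smul_right (k : ℤ) (x z : ι → ℤ) : bilin G x (k • z) = k * bilin G x z := by
  simp only [bilin, Finset.mul_sum, Pi.smul_apply, smul_eq_mul]
  refine Finset.sum_congr rfl fun i _ => Finset.sum_congr rfl fun j _ => by ring

theorem bilin_sub_right (x y z : ι → ℤ) : bilin G x (y - z) = bilin G x y - bilin G x z := by
  simp [bilin, mul_sub, Finset.sum_sub_distrib]

theorem bilin_sub_left (x y z : ι → ℤ) : bilin G (x - y) z = bilin G x z - bilin G y z := by
  simp [bilin, sub_mul, Finset.sum_sub_distrib]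

theorem bilin_neg_left (x z : ι → ℤ) : bilin G (-x) z = - bilin G x z := by
  simp [bilin]

theorem bilin_neg_right (x z : ι → ℤ) : bilin G x (-z) = - bilin G x z := by
  simp [bilin]

theorem bilin_zero_left (z : ι → ℤ) : bilin G 0 z = 0 := by
  simp [bilin]

theorem bilin_zero_right (z : ι → ℤ) : bilin G z 0 = 0 := by
  simp [bilin]

variable {G}

theorem bilin_comm (hG : G.IsSymm) (x y : ι → ℤ) : bilin G x y = bilin G y x := by
  unfold bilin
  rw [Finset.sum_comm]
  refine Finset.sum_congr rfl fun i _ => Finset.sum_congr rfl fun j _ => ?_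
  rw [hG.apply i j]; ring

theorem bilin_castV (x y : ι → ℤ) : bilinQ G (castV x) (castV y) = (bilin G x y : ℚ) := by
  simp [bilin, bilinQ, castV]

theorem bilinQ_smul_left (k : ℚ) (x z : ι → ℚ) : bilinQ G (k • x) z = k * bilinQ G x z := by
  simp [bilinQ, Finset.mul_sum, mul_assoc]

/-- linear Eichler transvection -/
def eichMap (G : Matrix ι ι ℤ) (e a : ι → ℤ) (q : ℤ) : (ι → ℤ) →ₗ[ℤ] (ι → ℤ) where
  toFun x := x - bilin G a x • e + bilin G e x • a - (q * bilin G e x) • e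
  map_add' x y := by
    simp only [bilin_add_right]; module
  map_smul' k x := by
    simp only [bilin_smul_right, RingHom.id_apply]; module

theorem eichMap_apply (e a : ι → ℤ) (q : ℤ) (x : ι → ℤ) : eichMap G e a q x =
    x - bilin G a x • e + bilin G e x • a - (q * bilin G e x) • e := rfl

theorem eichMap_inv (hG : G.IsSymm) (e a : ι → ℤ) (q : ℤ) (hee : bilin G e e = 0)
    (hea : bilin G e a = 0) (hq : bilin G a a = 2 * q) (x : ι → ℤ) :
    eichMap G e (-a) q (eichMap G e a q x) = x := by
  have hae : bilin G a e = 0 := by rw [bilin_comm hG, hea]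
  simp only [eichMap_apply, bilin_sub_right, bilin_add_right, bilin_smul_right, bilin_neg_left,
    hee, hea, hae, hq]
  module

/-- Eichler transvection -/
def eich (hG : G.IsSymm) (e a : ι → ℤ) (q : ℤ) (hee : bilin G e e = 0)
    (hea : bilin G e a = 0) (hq : bilin G a a = 2 * q) : (ι → ℤ) ≃ₗ[ℤ] (ι → ℤ) :=
  LinearEquiv.ofLinearMap (eichMap G e a q) (eichMap G e (-a) q)
    (by
      ext1 x
      have := eichMap_inv hG e (-a) q hee (by rw [bilin_neg_right, hea, neg_zero])
        (by rw [bilin_neg_right, bilin_neg_left, hq]; ring)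
      rw [neg_neg] at this
      ext1
      simp [this])
    (by
      ext1 x
      ext1
      simp [eichMap_inv hG e a q hee hea hq])

theorem eich_stable (hG : G.IsSymm) (e a : ι → ℤ) (q : ℤ) (hee : bilin G e e = 0)
    (hea : bilin G e a = 0) (hq : bilin G a a = 2 * q) :
    InStableO G (eich hG e a q hee hea hq) := by
  have hae : bilin G a e = 0 := by rw [bilin_comm hG, hea]
  constructor
  · intro x y
    change bilin G (eichMap G e a q x) (eichMap G e a q y) = _
    simp only [eichMap_apply, bilin_sub_right, bilin_add_right, bilin_smul_right,
      bilin_sub_left, bilin_add_left, bilin_smul_left, hee, hea, hae, hq]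
    rw [bilin_comm hG x e, bilin_comm hG x a]
    ring
  · intro y hy N x hx
    have key : ∀ l, ∃ A : ℤ, bilin G l x = N * A := by
      intro l
      obtain ⟨A, hA⟩ := hy l
      refine ⟨A, ?_⟩
      have h1 : (bilin G x l : ℚ) = N * A := by
        rw [← bilin_castV, ← hx, bilinQ_smul_left, hA]
      rw [bilin_comm hG]
      exact_mod_cast h1
    obtain ⟨A, hA⟩ := key a
    obtain ⟨E, hE⟩ := key e
    refine ⟨-(A • e) + E • a - (q * E) • e, ?_⟩
    change eichMap G e a q x - x = _
    rw [eichMap_apply, hA, hE]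
    module

/-- same stable orbit -/
def SRel (G : Matrix ι ι ℤ) (r s : ι → ℤ) : Prop :=
  ∃ g : (ι → ℤ) ≃ₗ[ℤ] (ι → ℤ), InStableO G g ∧ g r = s

theorem SRel.refl (r : ι → ℤ) : SRel G r r :=
  ⟨LinearEquiv.refl ℤ _, ⟨fun _ _ => rfl, fun _ _ _ x _ => ⟨0, by simp⟩⟩, rfl⟩

theorem SRel.symm {r s : ι → ℤ} (h : SRel G r s) : SRel G s r := by
  obtain ⟨g, ⟨h1, h2⟩, h3⟩ := h
  refine ⟨g.symm, ⟨?_, ?_⟩, by rw [← h3]; simp⟩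
  · intro x y
    rw [← h1]; simp
  · intro y hy N x hx
    obtain ⟨l, hl⟩ := h2 y hy N x hx
    refine ⟨- g.symm l, ?_⟩
    have := congrArg g.symm hl
    simp only [map_sub, LinearEquiv.symm_apply_apply, map_smul] at this
    rw [smul_neg, ← this]; abel

theorem SRel.trans {r s t : ι → ℤ} (h : SRel G r s) (h' : SRel G s t) : SRel G r t := by
  obtain ⟨g, ⟨h1, h2⟩, h3⟩ := h
  obtain ⟨g', ⟨h1', h2'⟩, h3'⟩ := h'
  refine ⟨g.trans g', ⟨?_, ?_⟩, by simp [h3, h3']⟩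
  · intro x y
    simp [h1', h1]
  · intro y hy N x hx
    obtain ⟨l, hl⟩ := h2 y hy N x hx
    obtain ⟨l', hl'⟩ := h2' y hy N x hx
    refine ⟨g' l + l', ?_⟩
    have := congrArg g' hl
    simp only [map_sub, map_smul] at this
    rw [smul_add, ← this, ← hl']
    simp

theorem SRel.eich (hG : G.IsSymm) (e a : ι → ℤ) (q : ℤ) (hee : bilin G e e = 0)
    (hea : bilin G e a = 0) (hq : bilin G a a = 2 * q) (r s : ι → ℤ)
    (h : r - bilin G a r • e + bilin G e r • a - (q * bilin G e r) • e = s) : SRel G r s :=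
  ⟨_, eich_stable hG e a q hee hea hq, h⟩

theorem SRel.norm {r s : ι → ℤ} (h : SRel G r s) : bilin G s s = bilin G r r := by
  obtain ⟨g, ⟨h1, h2⟩, h3⟩ := h
  rw [← h3, h1]

theorem SRel.divs {r s : ι → ℤ} {k : ℤ} (h : SRel G r s) (hk : ∀ l, k ∣ bilin G s l) :
    ∀ l, k ∣ bilin G r l := by
  obtain ⟨g, ⟨h1, h2⟩, h3⟩ := h
  intro l
  rw [← h1, h3]
  exact hk _

theorem SRel.diff {r s : ι → ℤ} {k : ℤ} (h : SRel G r s) (hk0 : k ≠ 0)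
    (hk : ∀ l, k ∣ bilin G r l) : ∃ l, s - r = k • l := by
  obtain ⟨g, ⟨h1, h2⟩, h3⟩ := h
  have hk0' : (k : ℚ) ≠ 0 := by exact_mod_cast hk0
  rw [← h3]
  refine h2 ((k : ℚ)⁻¹ • castV r) ?_ k r ?_
  · intro l
    obtain ⟨a, ha⟩ := hk l
    refine ⟨a, ?_⟩
    rw [bilinQ_smul_left, bilin_castV, ha]
    push_cast
    field_simp
  · rw [smul_smul, mul_inv_cancel₀ hk0', one_smul]

theorem orbit_eq_iff (r s : ι → ℤ) :
    ({r' | ∃ g : (ι → ℤ) ≃ₗ[ℤ] (ι → ℤ), InStableO G g ∧ g r = r'} =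
     {r' | ∃ g : (ι → ℤ) ≃ₗ[ℤ] (ι → ℤ), InStableO G g ∧ g s = r'}) ↔ SRel G r s := by
  constructor
  · intro h
    have : s ∈ {r' | ∃ g : (ι → ℤ) ≃ₗ[ℤ] (ι → ℤ), InStableO G g ∧ g s = r'} := SRel.refl s
    rw [← h] at this
    exact this
  · intro h
    ext t
    exact ⟨fun h' => h.symm.trans h', fun h' => h.trans h'⟩

end General

/-- coordinates -/
def mkV {m : ℕ} (x1 y1 x2 y2 : ℤ) (z : Fin m × Fin 8 → ℤ) (c : ℤ) : IdxL m → ℤ :=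
  Sum.elim (Sum.elim (Sum.elim ![x1, y1] ![x2, y2]) z) (fun _ => c)

theorem exists_mkV {m : ℕ} (r : IdxL m → ℤ) : ∃ x1 y1 x2 y2 z c, r = mkV x1 y1 x2 y2 z c := by
  refine ⟨r (.inl (.inl (.inl 0))), r (.inl (.inl (.inl 1))), r (.inl (.inl (.inr 0))),
    r (.inl (.inl (.inr 1))), fun p => r (.inl (.inr p)), r (.inr 0), ?_⟩
  funext i
  rcases i with ((i | i) | i) | i
  · fin_cases i <;> rfl
  · fin_cases i <;> rfl
  · rfl
  · fin_cases i; rfl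

theorem mkV_inj {m : ℕ} {x1 y1 x2 y2 c x1' y1' x2' y2' c' : ℤ} {z z' : Fin m × Fin 8 → ℤ}
    (h : mkV x1 y1 x2 y2 z c = mkV x1' y1' x2' y2' z' c') :
    x1 = x1' ∧ y1 = y1' ∧ x2 = x2' ∧ y2 = y2' ∧ z = z' ∧ c = c' :=
  ⟨congrFun h (.inl (.inl (.inl 0))), congrFun h (.inl (.inl (.inl 1))),
    congrFun h (.inl (.inl (.inr 0))), congrFun h (.inl (.inl (.inr 1))),
    funext fun p => congrFun h (.inl (.inr p)), congrFun h (.inr 0)⟩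

theorem mkV_add {m : ℕ} (x1 y1 x2 y2 c x1' y1' x2' y2' c' : ℤ) (z z' : Fin m × Fin 8 → ℤ) :
    mkV x1 y1 x2 y2 z c + mkV x1' y1' x2' y2' z' c' =
    mkV (x1 + x1') (y1 + y1') (x2 + x2') (y2 + y2') (z + z') (c + c') := by
  funext i
  rcases i with ((i | i) | i) | i
  · fin_cases i <;> rfl
  · fin_cases i <;> rfl
  · rfl
  · fin_cases i; rfl

theorem mkV_sub {m : ℕ} (x1 y1 x2 y2 c x1' y1' x2' y2' c' : ℤ) (z z' : Fin m × Fin 8 → ℤ) :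
    mkV x1 y1 x2 y2 z c - mkV x1' y1' x2' y2' z' c' =
    mkV (x1 - x1') (y1 - y1') (x2 - x2') (y2 - y2') (z - z') (c - c') := by
  funext i
  rcases i with ((i | i) | i) | i
  · fin_cases i <;> rfl
  · fin_cases i <;> rfl
  · rfl
  · fin_cases i; rfl

theorem mkV_smul {m : ℕ} (k x1 y1 x2 y2 c : ℤ) (z : Fin m × Fin 8 → ℤ) :
    k • mkV x1 y1 x2 y2 z c =
    mkV (k * x1) (k * y1) (k * x2) (k * y2) (k • z) (k * c) := by
  funext i
  rcases i with ((i | i) | i) | i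
  · fin_cases i <;> rfl
  · fin_cases i <;> rfl
  · rfl
  · fin_cases i; rfl

theorem bilin_mkV {m d : ℕ} (x1 y1 x2 y2 c x1' y1' x2' y2' c' : ℤ) (z z' : Fin m × Fin 8 → ℤ) :
    bilin (gramL m d) (mkV x1 y1 x2 y2 z c) (mkV x1' y1' x2' y2' z' c') =
    x1 * y1' + y1 * x1' + x2 * y2' + y2 * x2' + bilin (gramE8copies m) z z' - 2 * d * c * c' := by
  simp only [bilin, Fintype.sum_sum_type, gramL, gramII, mkV, gramU, Fin.sum_univ_two,
    Matrix.fromBlocks_apply₁₁, Matrix.fromBlocks_apply₁₂, Matrix.fromBlocks_apply₂₁,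
    Matrix.fromBlocks_apply₂₂, Sum.elim_inl, Sum.elim_inr]
  simp
  ring

theorem gramE8neg_symm (i j : Fin 8) : gramE8neg i j = gramE8neg j i := by
  simp only [gramE8neg, Matrix.neg_apply, CartanMatrix.E₈_isSymm.apply i j]

theorem gramE8copies_symm (m : ℕ) : (gramE8copies m).IsSymm := by
  ext p q
  simp only [Matrix.transpose_apply, gramE8copies, Matrix.of_apply, gramE8neg_symm q.2 p.2, eq_comm]

theorem gramL_symm (m d : ℕ) : (gramL m d).IsSymm := by
  unfold gramL gramII
  refine Matrix.IsSymm.fromBlocks (Matrix.IsSymm.fromBlocks (Matrix.IsSymm.fromBlocks ?_ ?_ ?_) ?_ (gramE8copies_symm m)) ?_ ?_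
  · ext i j; fin_cases i <;> fin_cases j <;> rfl
  · simp
  · ext i j; fin_cases i <;> fin_cases j <;> rfl
  · simp
  · simp
  · ext i j; fin_cases i; fin_cases j; rfl

theorem bilin_E8copies {m : ℕ} (z z' : Fin m × Fin 8 → ℤ) : bilin (gramE8copies m) z z' =
    ∑ k, bilin gramE8neg (fun i => z (k, i)) (fun i => z' (k, i)) := by
  simp only [bilin, Fintype.sum_prod_type, gramE8copies, Matrix.of_apply]
  refine Finset.sum_congr rfl fun k _ => Finset.sum_congr rfl fun i _ => ?_
  rw [Finset.sum_eq_single k]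
  · simp
  · intro b _ hb; simp [hb.symm]
  · simp

theorem E8_even (x : Fin 8 → ℤ) : ∃ q, bilin gramE8neg x x = 2 * q := by
  refine ⟨-(x 0^2+x 1^2+x 2^2+x 3^2+x 4^2+x 5^2+x 6^2+x 7^2) + (x 0 * x 2 + x 1 * x 3 + x 2 * x 3
    + x 3 * x 4 + x 4 * x 5 + x 5 * x 6 + x 6 * x 7), ?_⟩
  simp [bilin, gramE8neg, CartanMatrix.E₈, Fin.sum_univ_eight]
  ring

theorem E8copies_even {m : ℕ} (z : Fin m × Fin 8 → ℤ) :
    ∃ q, bilin (gramE8copies m) z z = 2 * q := by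
  choose f hf using fun k => E8_even (fun i => z (k, i))
  refine ⟨∑ k, f k, ?_⟩
  rw [bilin_E8copies, Finset.mul_sum]
  exact Finset.sum_congr rfl fun k _ => hf k

theorem E8_det : gramE8neg.det = 1 := by
  rw [gramE8neg, Matrix.det_neg, CartanMatrix.E₈_det]; decide

theorem E8_dvd (x : Fin 8 → ℤ) (k : ℤ) (h : ∀ l, k ∣ bilin gramE8neg x l) (i : Fin 8) :
    k ∣ x i := by
  have h1 : x = Matrix.vecMul (Matrix.vecMul x gramE8neg) gramE8neg⁻¹ := by
    rw [Matrix.vecMul_vecMul, Matrix.mul_nonsing_inv _ (by rw [E8_det]; exact isUnit_one),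
      Matrix.vecMul_one]
  rw [h1]
  unfold Matrix.vecMul dotProduct
  refine Finset.dvd_sum fun j _ => Dvd.dvd.mul_right ?_ _
  have := h (Pi.single j 1)
  simpa [bilin, Pi.single_apply] using this

theorem E8copies_dvd {m : ℕ} (z : Fin m × Fin 8 → ℤ) (k : ℤ)
    (h : ∀ l, k ∣ bilin (gramE8copies m) z l) : ∃ z', z = k • z' := by
  have : ∀ p, k ∣ z p := by
    rintro ⟨a, i⟩
    refine E8_dvd (fun i => z (a, i)) k (fun l => ?_) i
    have := h (fun p => if p.1 = a then l p.2 else 0)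
    rw [bilin_E8copies, Finset.sum_eq_single a] at this
    · simpa using this
    · intro b _ hb; simp [hb, bilin]
    · simp
  choose f hf using this
  exact ⟨f, funext hf⟩

/-- number of square roots of 1 -/
noncomputable def sq1 (n : ℕ) : ℕ := Nat.card {c : ZMod n // c * c = 1}

theorem sq1_mul {a b : ℕ} (h : a.Coprime b) : sq1 (a * b) = sq1 a * sq1 b := by
  unfold sq1
  rw [← Nat.card_prod]
  refine Nat.card_congr ?_
  let e := ZMod.chineseRemainder h
  refine (e.toEquiv.subtypeEquiv (q := fun p => p.1 * p.1 = 1 ∧ p.2 * p.2 = 1) ?_).trans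
    (Equiv.subtypeProdEquivProd (p := fun c : ZMod a => c * c = 1) (q := fun c : ZMod b => c * c = 1))
  intro c
  rw [← e.injective.eq_iff, map_mul, map_one, Prod.ext_iff]
  rfl

theorem sq1_one : sq1 1 = 1 := by
  unfold sq1
  rw [Nat.card_eq_fintype_card]; decide

theorem sq1_two : sq1 2 = 1 := by
  unfold sq1
  rw [Nat.card_eq_fintype_card]; decide

theorem sq1_four : sq1 4 = 2 := by
  unfold sq1
  rw [Nat.card_eq_fintype_card]; decide

theorem sq1_odd_prime_pow {p k : ℕ} (hp : p.Prime) (hp2 : p ≠ 2) (hk : 0 < k) :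
    sq1 (p ^ k) = 2 := by
  unfold sq1
  have hpk : p ∣ p ^ k := dvd_pow_self p hk.ne'
  have hp3 : ¬ p ∣ 2 := fun h => hp2 ((Nat.prime_dvd_prime_iff_eq hp Nat.prime_two).1 h)
  have hne : (1 : ZMod (p ^ k)) ≠ -1 := by
    intro h
    have h2 : ((2 : ℕ) : ZMod (p ^ k)) = 0 := by
      push_cast; linear_combination h
    rw [ZMod.natCast_eq_zero_iff] at h2
    exact hp3 (hpk.trans h2)
  have : {c : ZMod (p ^ k) | c * c = 1} = {1, -1} := by
    ext c
    simp only [Set.mem_setOf_eq, Set.mem_insert_iff, Set.mem_singleton_iff]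
    constructor
    · intro h
      obtain ⟨c, rfl⟩ := ZMod.intCast_surjective c
      have h1 : ((p : ℤ) ^ k) ∣ (c - 1) * (c + 1) := by
        have := (ZMod.intCast_zmod_eq_zero_iff_dvd ((c - 1) * (c + 1)) (p ^ k)).1
          (by push_cast; linear_combination h)
        exact_mod_cast this
      have hpZ : Prime (p : ℤ) := Nat.prime_iff_prime_int.1 hp
      have e1 : ((c : ZMod (p ^ k)) = 1) ↔ ((p : ℤ) ^ k) ∣ (c - 1) := by
        have := ZMod.intCast_zmod_eq_zero_iff_dvd (c - 1) (p ^ k)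
        push_cast at this
        rw [← this, sub_eq_zero]
      have e2 : ((c : ZMod (p ^ k)) = -1) ↔ ((p : ℤ) ^ k) ∣ (c + 1) := by
        have := ZMod.intCast_zmod_eq_zero_iff_dvd (c + 1) (p ^ k)
        push_cast at this
        rw [← this, add_eq_zero_iff_eq_neg]
      rw [e1, e2]
      by_cases hc : (p : ℤ) ∣ c - 1
      · left
        refine (IsCoprime.dvd_of_dvd_mul_right ?_ h1)
        apply IsCoprime.pow_left
        rw [hpZ.irreducible.coprime_iff_not_dvd]
        intro h'
        apply hp3
        have := dvd_sub h' hc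
        have h2 : c + 1 - (c - 1) = 2 := by ring
        rw [h2] at this
        exact_mod_cast this
      · right
        refine (IsCoprime.dvd_of_dvd_mul_left ?_ h1)
        apply IsCoprime.pow_left
        rwa [hpZ.irreducible.coprime_iff_not_dvd]
    · rintro (rfl | rfl) <;> ring
  change Nat.card ↥{c : ZMod (p ^ k) | c * c = 1} = 2
  rw [this, Nat.card_coe_set_eq, Set.ncard_pair hne]

theorem sq1_two_pow {k : ℕ} : sq1 (2 ^ (k + 3)) = 4 := by
  unfold sq1
  set n := 2 ^ (k + 3) with hn
  have hnz : (n : ℤ) = 2 ^ (k + 2) * 2 := by rw [hn]; push_cast; ring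
  have e : ∀ c : ℤ, (c : ZMod n) = 0 ↔ (2 ^ (k + 2) * 2 : ℤ) ∣ c := by
    intro c; rw [ZMod.intCast_zmod_eq_zero_iff_dvd, hnz]
  set t : ℤ := 2 ^ k with ht
  have ht0 : 0 < t := by positivity
  have hn' : ∀ c : ℤ, (c : ZMod n) = 0 ↔ (8 * t : ℤ) ∣ c := by
    intro c; rw [e, ht, show (2 ^ (k + 2) * 2 : ℤ) = 8 * 2 ^ k by ring]
  have small : ∀ c : ℤ, c ≠ 0 → |c| < 8 * t → (c : ZMod n) ≠ 0 := by
    intro c hc h1 h2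
    rw [hn'] at h2
    exact hc (Int.eq_zero_of_abs_lt_dvd h2 h1)
  have : {c : ZMod n | c * c = 1} = ((({1, -1, 1 + 4 * t, -1 + 4 * t} : Finset ℤ).image
      (fun c : ℤ => (c : ZMod n)) : Finset (ZMod n)) : Set (ZMod n)) := by
    ext c
    obtain ⟨c, rfl⟩ := ZMod.intCast_surjective c
    have eqv : ∀ b : ℤ, (b : ZMod n) = c ↔ 8 * t ∣ c - b := by
      intro b
      rw [← hn']; push_cast; rw [sub_eq_zero, eq_comm]
    simp only [Set.mem_setOf_eq, Finset.coe_image, Finset.coe_insert, Finset.coe_singleton,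
      Set.mem_image, Set.mem_insert_iff, Set.mem_singleton_iff, exists_eq_or_imp,
      exists_eq_left, eqv]
    have h0 : ((c : ZMod n) * c = 1) ↔ 8 * t ∣ c * c - 1 := by
      rw [← hn']; push_cast; rw [sub_eq_zero]
    rw [h0]
    constructor
    · intro h
      have hodd : Odd c := by
        rcases Int.even_or_odd c with ⟨b, hb⟩ | h'
        · exfalso
          have : (2 : ℤ) ∣ c * c - 1 := (Dvd.intro (4 * t) (by ring)).trans h
          subst hb
          have h2 : (b + b) * (b + b) = 2 * (2 * (b * b)) := by ring
          omega
        · exact h'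
      obtain ⟨b, rfl⟩ := hodd
      -- now b (b + 1) is divisible by 2 t
      obtain ⟨s, hs⟩ := h
      have h1 : (2 : ℤ) ^ (k + 1) ∣ b * (b + 1) := ⟨s, by
        rw [pow_succ, ← ht]; linarith⟩
      have key : (2 : ℤ) ^ (k + 1) ∣ b ∨ (2 : ℤ) ^ (k + 1) ∣ b + 1 := by
        rcases Int.even_or_odd b with hb | hb
        · left
          refine IsCoprime.dvd_of_dvd_mul_right ?_ h1
          apply IsCoprime.pow_left
          rw [Int.prime_two.irreducible.coprime_iff_not_dvd]
          obtain ⟨b, rfl⟩ := hb; omega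
        · right
          refine IsCoprime.dvd_of_dvd_mul_left ?_ h1
          apply IsCoprime.pow_left
          rw [Int.prime_two.irreducible.coprime_iff_not_dvd]
          obtain ⟨b, rfl⟩ := hb; omega
      rcases key with ⟨u, hu⟩ | ⟨u, hu⟩
      · rw [pow_succ, ← ht] at hu
        rcases Int.even_or_odd' u with ⟨v, rfl | rfl⟩
        · left; exact ⟨v, by rw [hu]; ring⟩
        · right; right; left; exact ⟨v, by rw [hu]; ring⟩
      · rw [pow_succ, ← ht] at hu
        obtain rfl : b = t * 2 * u - 1 := by linarith
        rcases Int.even_or_odd' u with ⟨v, rfl | rfl⟩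
        · right; left; exact ⟨v, by ring⟩
        · right; right; right; exact ⟨v, by ring⟩
    · have : ∀ b : ℤ, 8 * t ∣ b * b - 1 → 8 * t ∣ c - b → 8 * t ∣ c * c - 1 := by
        intro b hb hc
        have : c * c - 1 = (c - b) * (c + b) + (b * b - 1) := by ring
        rw [this]
        exact dvd_add (hc.mul_right _) hb
      rintro (h | h | h | h) <;> refine this _ ?_ h
      · simp
      · simp
      · exact ⟨1 + 2 * t, by ring⟩
      · exact ⟨-1 + 2 * t, by ring⟩
  change Nat.card ↥{c : ZMod n | c * c = 1} = 4
  rw [this, Nat.card_coe_set_eq, Set.ncard_coe_finset, Finset.card_image_of_injOn]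
  · rw [Finset.card_insert_of_notMem, Finset.card_insert_of_notMem, Finset.card_pair]
    · omega
    · simp; omega
    · simp; omega
  · intro a ha b hb hab
    simp only [Finset.coe_insert, Finset.coe_singleton, Set.mem_insert_iff, Set.mem_singleton_iff] at ha hb
    by_contra hne
    refine small (a - b) (sub_ne_zero.2 hne) ?_ (by push_cast; rw [sub_eq_zero]; exact hab)
    rw [abs_lt]
    rcases ha with rfl | rfl | rfl | rfl <;> rcases hb with rfl | rfl | rfl | rfl <;>
      constructor <;> omega

theorem sq1_odd (o : ℕ) (ho : Odd o) : sq1 o = 2 ^ o.primeFactors.card := by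
  induction o using Nat.recOnPosPrimePosCoprime with
  | zero => simp at ho
  | one => simp [sq1_one]
  | prime_pow p n hp hn =>
    rw [sq1_odd_prime_pow hp _ hn, Nat.primeFactors_prime_pow hn.ne' hp]
    · simp
    · rintro rfl
      rw [Nat.odd_pow_iff hn.ne'] at ho
      exact absurd ho (by decide)
  | coprime a b ha hb hab iha ihb =>
    rw [Nat.odd_mul] at ho
    rw [sq1_mul hab, iha ho.1, ihb ho.2, hab.primeFactors_mul,
      Finset.card_union_of_disjoint hab.disjoint_primeFactors, pow_add]

theorem primeFactors_card_two_pow_mul {k o : ℕ} (ho : Odd o) (hk : k ≠ 0) :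
    (2 ^ k * o).primeFactors.card = o.primeFactors.card + 1 := by
  have hc : (2 ^ k).Coprime o := Nat.Coprime.pow_left k (Nat.coprime_two_left.2 ho)
  rw [hc.primeFactors_mul,
      Finset.card_union_of_disjoint hc.disjoint_primeFactors, Nat.primeFactors_prime_pow hk Nat.prime_two]
  simp [add_comm]

theorem sq1_two_pow_mul {k o : ℕ} (ho : Odd o) :
    sq1 (2 ^ k * o) = sq1 (2 ^ k) * 2 ^ o.primeFactors.card := by
  rw [sq1_mul (Nat.Coprime.pow_left k (Nat.coprime_two_left.2 ho)), sq1_odd o ho]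

theorem sq1_count (d : ℕ) (hd : 1 < d) :
    ((Odd d ∨ d % 8 = 4) → sq1 d = 2 ^ d.primeFactors.card) ∧
    (d % 8 = 0 → sq1 d = 2 ^ (d.primeFactors.card + 1)) ∧
    (d % 4 = 2 → sq1 d = 2 ^ (d.primeFactors.card - 1)) := by
  obtain ⟨k, o, ho, rfl⟩ := Nat.exists_eq_two_pow_mul_odd (show d ≠ 0 by omega)
  obtain ⟨b, hb⟩ := id ho
  rcases k with _ | _ | _ | k
  · refine ⟨fun _ => ?_, fun h => ?_, fun h => ?_⟩
    · simpa using sq1_odd o ho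
    · omega
    · omega
  · refine ⟨fun h => ?_, fun h => ?_, fun h => ?_⟩
    · rw [Nat.odd_iff] at h; omega
    · omega
    · rw [primeFactors_card_two_pow_mul ho (by simp), sq1_two_pow_mul ho]
      simp [sq1_two]
  · refine ⟨fun h => ?_, fun h => ?_, fun h => ?_⟩
    · rw [primeFactors_card_two_pow_mul ho (by simp), sq1_two_pow_mul ho]
      norm_num [sq1_four, pow_succ, mul_comm]
    · omega
    · omega
  · have h8 : 2 ^ (k + 1 + 1 + 1) * o = 8 * (2 ^ k * o) := by ring
    refine ⟨fun h => ?_, fun h => ?_, fun h => ?_⟩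
    · rw [Nat.odd_iff] at h; omega
    · rw [primeFactors_card_two_pow_mul ho (by simp), sq1_two_pow_mul ho, sq1_two_pow]
      ring
    · omega

section Moves
variable {m d : ℕ} (x1 y1 x2 y2 : ℤ) (z : Fin m × Fin 8 → ℤ) (c : ℤ)

theorem mv1 (k : ℤ) : SRel (gramL m d) (mkV x1 y1 x2 y2 z c)
    (mkV (x1 - k * y2) y1 (x2 + k * y1) y2 z c) := by
  refine SRel.eich (gramL_symm m d) (mkV 1 0 0 0 0 0) (mkV 0 0 k 0 0 0) 0 ?_ ?_ ?_ _ _ ?_ <;>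
    simp only [bilin_mkV, mkV_add, mkV_sub, mkV_smul, bilin_zero_left, bilin_zero_right,
      smul_zero, add_zero, sub_zero] <;> (congr 1 <;> ring)

theorem mv2 (k : ℤ) : SRel (gramL m d) (mkV x1 y1 x2 y2 z c)
    (mkV (x1 - k * x2) y1 x2 (y2 + k * y1) z c) := by
  refine SRel.eich (gramL_symm m d) (mkV 1 0 0 0 0 0) (mkV 0 0 0 k 0 0) 0 ?_ ?_ ?_ _ _ ?_ <;>
    simp only [bilin_mkV, mkV_add, mkV_sub, mkV_smul, bilin_zero_left, bilin_zero_right,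
      smul_zero, add_zero, sub_zero] <;> (congr 1 <;> ring)

theorem mv3 (k : ℤ) : SRel (gramL m d) (mkV x1 y1 x2 y2 z c)
    (mkV x1 (y1 - k * y2) (x2 + k * x1) y2 z c) := by
  refine SRel.eich (gramL_symm m d) (mkV 0 1 0 0 0 0) (mkV 0 0 k 0 0 0) 0 ?_ ?_ ?_ _ _ ?_ <;>
    simp only [bilin_mkV, mkV_add, mkV_sub, mkV_smul, bilin_zero_left, bilin_zero_right,
      smul_zero, add_zero, sub_zero] <;> (congr 1 <;> ring)

theorem mv4 (k : ℤ) : SRel (gramL m d) (mkV x1 y1 x2 y2 z c)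
    (mkV x1 (y1 - k * x2) x2 (y2 + k * x1) z c) := by
  refine SRel.eich (gramL_symm m d) (mkV 0 1 0 0 0 0) (mkV 0 0 0 k 0 0) 0 ?_ ?_ ?_ _ _ ?_ <;>
    simp only [bilin_mkV, mkV_add, mkV_sub, mkV_smul, bilin_zero_left, bilin_zero_right,
      smul_zero, add_zero, sub_zero] <;> (congr 1 <;> ring)

theorem mvf (a : Fin m × Fin 8 → ℤ) (b : ℤ) : ∃ y1', SRel (gramL m d) (mkV x1 y1 x2 y2 z c)
    (mkV x1 y1' x2 y2 (z + x1 • a) (c + x1 * b)) := by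
  obtain ⟨q, hq⟩ := E8copies_even a
  refine ⟨y1 - (bilin (gramE8copies m) a z - 2 * d * b * c) - (q - d * b * b) * x1, ?_⟩
  refine SRel.eich (gramL_symm m d) (mkV 0 1 0 0 0 0) (mkV 0 0 0 0 a b) (q - d * b * b)
    ?_ ?_ ?_ _ _ ?_ <;>
    simp only [bilin_mkV, mkV_add, mkV_sub, mkV_smul, bilin_zero_left, bilin_zero_right,
      smul_zero, add_zero, sub_zero, hq]
  · ring
  · ring
  · ring
  · congr 1
    · ring
    · ring
    · ring
    · ring
    · module
    · ring

theorem mve (a : Fin m × Fin 8 → ℤ) (b : ℤ) : SRel (gramL m d) (mkV x1 y1 x2 0 z c)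
    (mkV x1 y1 (x2 - (bilin (gramE8copies m) a z - 2 * d * b * c)) 0 z c) := by
  obtain ⟨q, hq⟩ := E8copies_even a
  refine SRel.eich (gramL_symm m d) (mkV 0 0 1 0 0 0) (mkV 0 0 0 0 a b) (q - d * b * b)
    ?_ ?_ ?_ _ _ ?_ <;>
    simp only [bilin_mkV, mkV_add, mkV_sub, mkV_smul, bilin_zero_left, bilin_zero_right,
      smul_zero, add_zero, sub_zero, hq]
  · ring
  · ring
  · ring
  · congr 1
    · ring
    · ring
    · ring
    · ring
    · module
    · ring

end Moves

theorem exists_rep (a b : ℤ) (hb : b ≠ 0) : ∃ k, 0 < a - k * b ∧ a - k * b ≤ |b| := by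
  refine ⟨(a - 1) / b, ?_⟩
  have h1 := Int.emod_nonneg (a - 1) hb
  have h2 := Int.emod_lt_abs (a - 1) hb
  have h3 := Int.emod_add_mul_ediv (a - 1) b
  have h4 : (a - 1) / b * b = b * ((a - 1) / b) := mul_comm _ _
  constructor <;> linarith

/-- first hyperbolic coordinate `n` is reachable from `r` and positive -/
def Reach (m d : ℕ) (r : IdxL m → ℤ) (n : ℤ) : Prop :=
  0 < n ∧ ∃ y1 x2 y2 z c, SRel (gramL m d) r (mkV n y1 x2 y2 z c)

theorem reach_exists (m d : ℕ) (r : IdxL m → ℤ) (l : IdxL m → ℤ)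
    (hl : bilin (gramL m d) r l ≠ 0) : ∃ n, Reach m d r n := by
  have A : ∀ x1 y1 x2 y2 z c, SRel (gramL m d) r (mkV x1 y1 x2 y2 z c) → x2 ≠ 0 →
      ∃ n, Reach m d r n := by
    intro x1 y1 x2 y2 z c h h2
    obtain ⟨k, hk, -⟩ := exists_rep x1 x2 h2
    exact ⟨_, hk, _, _, _, _, _, h.trans (mv2 _ _ _ _ _ _ k)⟩
  have B : ∀ x1 y1 x2 y2 z c, SRel (gramL m d) r (mkV x1 y1 x2 y2 z c) → y2 ≠ 0 →
      ∃ n, Reach m d r n := by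
    intro x1 y1 x2 y2 z c h h2
    obtain ⟨k, hk, -⟩ := exists_rep x1 y2 h2
    exact ⟨_, hk, _, _, _, _, _, h.trans (mv1 _ _ _ _ _ _ k)⟩
  obtain ⟨x1, y1, x2, y2, z, c, hr⟩ := exists_mkV r
  obtain ⟨u1, v1, u2, v2, w, b, rfl⟩ := exists_mkV l
  have h0 : SRel (gramL m d) r (mkV x1 y1 x2 y2 z c) := hr ▸ SRel.refl r
  by_cases hx2 : x2 = 0
  swap
  · exact A _ _ _ _ _ _ h0 hx2
  by_cases hy2 : y2 = 0
  swap
  · exact B _ _ _ _ _ _ h0 hy2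
  subst hx2 hy2
  by_cases hx1 : x1 = 0
  swap
  · exact A _ _ _ _ _ _ (h0.trans (mv3 _ _ _ _ _ _ 1)) (by simpa using hx1)
  by_cases hy1 : y1 = 0
  swap
  · exact A _ _ _ _ _ _ (h0.trans (mv1 _ _ _ _ _ _ 1)) (by simpa using hy1)
  subst hx1 hy1
  refine A _ _ _ _ _ _ (h0.trans (mve _ _ _ _ _ w b)) ?_
  intro h
  apply hl
  rw [hr, bilin_mkV, bilin_comm (gramE8copies_symm m)]
  linarith

theorem reach_min (m d : ℕ) (r : IdxL m → ℤ) (h : ∃ n, Reach m d r n) :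
    ∃ n, Reach m d r n ∧ ∀ n', Reach m d r n' → n ≤ n' := by
  obtain ⟨n, hn⟩ := h
  classical
  have hex : ∃ k : ℕ, Reach m d r k := ⟨n.toNat, by rwa [Int.toNat_of_nonneg hn.1.le]⟩
  refine ⟨Nat.find hex, Nat.find_spec hex, fun n' hn' => ?_⟩
  have := Nat.find_min' hex (m := n'.toNat) (by rwa [Int.toNat_of_nonneg hn'.1.le])
  have := hn'.1
  omega

theorem canon_reach (m d : ℕ) (hd : 1 < d) (r : IdxL m → ℤ)
    (hn : bilin (gramL m d) r r = -(2 * (d : ℤ)))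
    (hdiv : IsDivisorOf (gramL m d) r (d : ℤ)) :
    ∃ c : ℤ, ∀ c0 : ℤ, (d : ℤ) ∣ c0 - c → (d : ℤ) ∣ c0 ^ 2 - 1 ∧
      SRel (gramL m d) r (mkV d (c0 ^ 2 - 1) 0 0 0 c0) := by
  obtain ⟨hd0, hdv, l0, hl0⟩ := hdiv
  obtain ⟨n, ⟨hn0, y1, x2, y2, z, c, hr⟩, hmin⟩ :=
    reach_min m d r (reach_exists m d r l0 (by rw [hl0]; omega))
  have hx : ∀ y1 x2 y2 z c, SRel (gramL m d) r (mkV n y1 x2 y2 z c) → n ∣ x2 := by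
    intro y1 x2 y2 z c h
    by_contra hne
    have h' := h.trans (mv3 _ _ _ _ _ _ (-(x2 / n)))
    have e : x2 + -(x2 / n) * n = x2 % n := by
      have := Int.emod_add_mul_ediv x2 n; linarith
    rw [e] at h'
    have h1 : x2 % n ≠ 0 := fun h => hne (Int.dvd_of_emod_eq_zero h)
    obtain ⟨k, hk1, hk2⟩ := exists_rep n (x2 % n) h1
    have := hmin _ ⟨hk1, _, _, _, _, _, h'.trans (mv2 _ _ _ _ _ _ k)⟩
    rw [abs_of_nonneg (Int.emod_nonneg _ hn0.ne')] at hk2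
    have := Int.emod_lt_of_pos x2 hn0
    omega
  have hy : ∀ y1 x2 y2 z c, SRel (gramL m d) r (mkV n y1 x2 y2 z c) → n ∣ y2 := by
    intro y1 x2 y2 z c h
    by_contra hne
    have h' := h.trans (mv4 _ _ _ _ _ _ (-(y2 / n)))
    have e : y2 + -(y2 / n) * n = y2 % n := by
      have := Int.emod_add_mul_ediv y2 n; linarith
    rw [e] at h'
    have h1 : y2 % n ≠ 0 := fun h => hne (Int.dvd_of_emod_eq_zero h)
    obtain ⟨k, hk1, hk2⟩ := exists_rep n (y2 % n) h1
    have := hmin _ ⟨hk1, _, _, _, _, _, h'.trans (mv1 _ _ _ _ _ _ k)⟩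
    rw [abs_of_nonneg (Int.emod_nonneg _ hn0.ne')] at hk2
    have := Int.emod_lt_of_pos y2 hn0
    omega
  -- clear `x2`, `y2`
  obtain ⟨k, hk⟩ := hx _ _ _ _ _ hr
  obtain ⟨k', hk'⟩ := hy _ _ _ _ _ hr
  have hr2 := hr.trans (mv3 _ _ _ _ _ _ (-k))
  rw [show x2 + -k * n = 0 by rw [hk]; ring] at hr2
  have hr3 := hr2.trans (mv4 _ _ _ _ _ _ (-k'))
  rw [show y2 + -k' * n = 0 by rw [hk']; ring] at hr3
  generalize y1 - -k * y2 - -k' * 0 = t at hr3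
  clear hr2 hr
  have ht : n ∣ t := by
    have h1 := hr3.trans (mv1 _ _ _ _ _ _ 1)
    rw [show n - 1 * 0 = n by ring, show 0 + 1 * t = t by ring] at h1
    exact hx _ _ _ _ _ h1
  have hw : ∀ a b, n ∣ bilin (gramE8copies m) a z - 2 * d * b * c := by
    intro a b
    have := hx _ _ _ _ _ (hr3.trans (mve _ _ _ _ _ a b))
    rw [zero_sub, dvd_neg] at this
    exact this
  have hnd : n ∣ d := by
    rw [← hl0]
    refine hr3.divs ?_ l0
    intro l
    obtain ⟨u1, v1, u2, v2, w, b, rfl⟩ := exists_mkV l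
    have e : bilin (gramL m d) (mkV n t 0 0 z c) (mkV u1 v1 u2 v2 w b) =
        n * v1 + t * u1 + (bilin (gramE8copies m) w z - 2 * d * b * c) := by
      rw [bilin_mkV, bilin_comm (gramE8copies_symm m) z w]; ring
    rw [e]
    exact dvd_add (dvd_add (dvd_mul_right _ _) (ht.mul_right _)) (hw w b)
  have hdv3 := hr3.symm.divs hdv
  have hdn : (d : ℤ) ∣ n := by
    have := hdv3 (mkV 0 1 0 0 0 0)
    rw [bilin_mkV] at this
    simpa [bilin_zero_right] using this
  obtain rfl : n = d := Int.dvd_antisymm hn0.le hd0.le hnd hdn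
  obtain ⟨z', rfl⟩ : ∃ z', z = (d : ℤ) • z' := by
    apply E8copies_dvd
    intro l
    have := hdv3 (mkV 0 0 0 0 l 0)
    rw [bilin_mkV] at this
    simpa using this
  refine ⟨c, ?_⟩
  rintro c0 ⟨b, hb⟩
  obtain ⟨t', h4⟩ := mvf (d := d) (d : ℤ) t 0 0 ((d : ℤ) • z') c (-z') b
  have h5 := hr3.trans h4
  rw [show (d : ℤ) • z' + (d : ℤ) • -z' = 0 by simp, show c + d * b = c0 by linarith] at h5
  have hnorm := h5.norm
  rw [hn, bilin_mkV, bilin_zero_left] at hnorm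
  have ht' : t' = c0 ^ 2 - 1 := by
    have : (2 * d : ℤ) * (t' - (c0 ^ 2 - 1)) = 0 := by linear_combination hnorm
    rcases mul_eq_zero.1 this with h | h
    · omega
    · linarith
  rw [ht'] at h5
  refine ⟨?_, h5⟩
  have := h5.symm.divs hdv (mkV 1 0 0 0 0 0)
  rw [bilin_mkV] at this
  simpa [bilin_zero_right] using this

theorem canon_mem (m d : ℕ) (hd : 1 < d) (c : ℤ) (hc : (d : ℤ) ∣ c ^ 2 - 1) :
    IsPrim (mkV d (c ^ 2 - 1) 0 0 0 c : IdxL m → ℤ) ∧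
    bilin (gramL m d) (mkV d (c ^ 2 - 1) 0 0 0 c) (mkV d (c ^ 2 - 1) 0 0 0 c) = -(2 * (d : ℤ)) ∧
            IsDivisorOf (gramL m d) (mkV d (c ^ 2 - 1) 0 0 0 c) (d : ℤ) := by
  refine ⟨?_, ?_, by omega, ?_, ?_⟩
  · intro k x hx
    obtain ⟨u1, v1, u2, v2, w, b, rfl⟩ := exists_mkV x
    rw [mkV_smul] at hx
    obtain ⟨-, h1, -, -, -, h2⟩ := mkV_inj hx
    apply isUnit_of_dvd_one
    refine ⟨b * c - v1, ?_⟩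
    rw [mul_sub, ← h1, ← mul_assoc, ← h2]; ring
  · rw [bilin_mkV, bilin_zero_left]; ring
  · intro l
    obtain ⟨u1, v1, u2, v2, w, b, rfl⟩ := exists_mkV l
    obtain ⟨s, hs⟩ := hc
    rw [bilin_mkV, bilin_zero_left, hs]
    exact ⟨v1 + s * u1 - 2 * c * b, by ring⟩
  · refine ⟨mkV 0 1 0 0 0 0, ?_⟩
    rw [bilin_mkV, bilin_zero_left]; ring

theorem zmod_sq_iff (d : ℕ) (c : ℤ) : (c : ZMod d) * c = 1 ↔ (d : ℤ) ∣ c ^ 2 - 1 := by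
  rw [← ZMod.intCast_zmod_eq_zero_iff_dvd]
  push_cast
  rw [sub_eq_zero, sq]

theorem card_orbits_eq (m d : ℕ) (hd : 1 < d) :
    Nat.card
        ↥(stableOrbits (gramL m d)
          {r | IsPrim r ∧ bilin (gramL m d) r r = -(2 * (d : ℤ)) ∧
            IsDivisorOf (gramL m d) r (d : ℤ)}) = sq1 d := by
  have : NeZero d := ⟨by omega⟩
  unfold sq1
  symm
  have hlift : ∀ c : ZMod d, ((c.val : ℤ) : ZMod d) = c := by intro c; simp
  let f : {c : ZMod d // c * c = 1} → ↥(stableOrbits (gramL m d)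
          {r | IsPrim r ∧ bilin (gramL m d) r r = -(2 * (d : ℤ)) ∧
            IsDivisorOf (gramL m d) r (d : ℤ)}) := fun c =>
    ⟨_, mkV d ((c.1.val : ℤ) ^ 2 - 1) 0 0 0 (c.1.val : ℤ),
      canon_mem m d hd _ ((zmod_sq_iff d _).1 (by rw [hlift]; exact c.2)), rfl⟩
  refine Nat.card_eq_of_bijective f ⟨?_, ?_⟩
  · rintro ⟨c, hc⟩ ⟨c', hc'⟩ h
    have h1 := (orbit_eq_iff _ _).1 (Subtype.ext_iff.1 h)
    have hm := canon_mem m d hd _ ((zmod_sq_iff d (c.val : ℤ)).1 (by rw [hlift]; exact hc))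
    obtain ⟨l, hl⟩ := h1.diff (by omega) hm.2.2.2.1
    obtain ⟨u1, v1, u2, v2, w, b, rfl⟩ := exists_mkV l
    rw [mkV_sub, mkV_smul] at hl
    obtain ⟨-, -, -, -, -, h2⟩ := mkV_inj hl
    have h3 := congrArg (fun x : ℤ => (x : ZMod d)) h2
    apply Subtype.ext
    simp [sub_eq_zero] at h3
    exact h3.symm
  · rintro ⟨O, r, ⟨hp, hn, hdv⟩, rfl⟩
    obtain ⟨c, hc⟩ := canon_reach m d hd r hn hdv
    have h0 := hc (((c : ZMod d).val : ℕ) : ℤ) (by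
      rw [← ZMod.intCast_zmod_eq_zero_iff_dvd]; simp)
    have h1 := (zmod_sq_iff d _).2 h0.1
    rw [hlift] at h1
    refine ⟨⟨(c : ZMod d), h1⟩, Subtype.ext ?_⟩
    exact (orbit_eq_iff _ _).2 h0.2.symm

/-- For `d > 1`, the number of orbits of `Õ(L_{2d}^{(m)})` on the set
of primitive vectors `r` with `(r,r) = −2d` and `div(r) = d` equals `2^{ρ(d)}` if `d` is
odd or `d ≡ 4 mod 8`, equals `2^{ρ(d)+1}` if `d ≡ 0 mod 8`, and equals `2^{ρ(d)−1}` if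
`d ≡ 2 mod 4`, where `ρ(d)` is the number of distinct prime divisors of `d`. -/
theorem card_orbits_of_minus_two_d_vectors_divisor_d
    (m d : ℕ) (hd : 1 < d) :
    ((Odd d ∨ d % 8 = 4) →
      Nat.card
        ↥(stableOrbits (gramL m d)
          {r | IsPrim r ∧ bilin (gramL m d) r r = -(2 * (d : ℤ)) ∧
            IsDivisorOf (gramL m d) r (d : ℤ)}) = 2 ^ d.primeFactors.card) ∧
    (d % 8 = 0 →
      Nat.card
        ↥(stableOrbits (gramL m d)
          {r | IsPrim r ∧ bilin (gramL m d) r r = -(2 * (d : ℤ)) ∧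
            IsDivisorOf (gramL m d) r (d : ℤ)}) = 2 ^ (d.primeFactors.card + 1)) ∧
    (d % 4 = 2 →
      Nat.card
        ↥(stableOrbits (gramL m d)
          {r | IsPrim r ∧ bilin (gramL m d) r r = -(2 * (d : ℤ)) ∧
            IsDivisorOf (gramL m d) r (d : ℤ)}) = 2 ^ (d.primeFactors.card - 1)) := by
  rw [card_orbits_eq m d hd]
  exact sq1_count d hd
end

section
/- Let L be a lattice (a free ℤ-module of finite rank with a nondegenerate symmetric ℤ-valued bilinear form), let r ∈ L be a primitive vector with (r,r) ≠ 0, and let K_r = {x ∈ L : (x,r) = 0}. Then the sublattice ℤr ⊕ K_r has finite index in L, and [L : ℤr ⊕ K_r] = |(r,r)| / div(r). -/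
/-- `L` is a (full, integral, nondegenerate, symmetric) lattice in the rational vector
space `V` with respect to the bilinear form `B`:  it is finitely generated, spans `V`
over `ℚ`, the form is symmetric, nondegenerate, and `ℤ`-valued on `L`. -/
def IsIntLattice {V : Type} [AddCommGroup V] [Module ℚ V]
    (B : V →ₗ[ℚ] V →ₗ[ℚ] ℚ) (L : Submodule ℤ V) : Prop :=
  L.FG ∧ Submodule.span ℚ (L : Set V) = ⊤ ∧
    (∀ x y : V, B x y = B y x) ∧
    (∀ x : V, (∀ y : V, B x y = 0) → x = 0) ∧
    (∀ x ∈ L, ∀ y ∈ L, ∃ a : ℤ, B x y = (a : ℚ))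

/-- `r` is a primitive vector of `L`: `ℚr ∩ L = ℤr`. -/
def IsPrimitiveVec {V : Type} [AddCommGroup V] [Module ℚ V]
    (L : Submodule ℤ V) (r : V) : Prop :=
  r ∈ L ∧ ∀ x ∈ L, (∃ q : ℚ, x = q • r) → ∃ a : ℤ, x = a • r

/-- `s` is the divisor `div(r)` of `r`: the positive generator of the ideal
`{(r,l) : l ∈ L} ⊆ ℤ`. -/
def IsDivOf {V : Type} [AddCommGroup V] [Module ℚ V]
    (B : V →ₗ[ℚ] V →ₗ[ℚ] ℚ) (L : Submodule ℤ V) (r : V) (s : ℤ) : Prop :=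
  0 < s ∧ (∀ l ∈ L, ∃ a : ℤ, B r l = ((s * a : ℤ) : ℚ)) ∧ ∃ l ∈ L, B r l = (s : ℚ)

/-- The orthogonal complement `K_r = {x ∈ L : (x,r) = 0}` of `r` in `L`, as a
`ℤ`-submodule of the ambient space. -/
def orthCompl {V : Type} [AddCommGroup V] [Module ℚ V]
    (B : V →ₗ[ℚ] V →ₗ[ℚ] ℚ) (L : Submodule ℤ V) (r : V) : Submodule ℤ V :=
  L ⊓ (LinearMap.ker (B.flip r)).restrictScalars ℤ

/-- Let `L` be a lattice, `r ∈ L` a primitive vector with `(r,r) ≠ 0`,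
and `K_r = {x ∈ L : (x,r) = 0}`.  Then `ℤr ⊕ K_r` has finite index in `L`, and
`[L : ℤr ⊕ K_r] = |(r,r)| / div(r)`. -/
theorem index_of_orthogonal_splitting
    {V : Type} [AddCommGroup V] [Module ℚ V]
    (B : V →ₗ[ℚ] V →ₗ[ℚ] ℚ) (L : Submodule ℤ V)
    (hlat : IsIntLattice B L)
    (r : V) (hprim : IsPrimitiveVec L r) (hne : B r r ≠ 0)
    (s : ℤ) (hs : IsDivOf B L r s) :
    0 < Nat.card
        (↥L ⧸ (Submodule.comap L.subtype (Submodule.span ℤ {r} ⊔ orthCompl B L r))) ∧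
      (Nat.card
        (↥L ⧸ (Submodule.comap L.subtype (Submodule.span ℤ {r} ⊔ orthCompl B L r))) : ℚ)
        * (s : ℚ) = |B r r| := by
  obtain ⟨hs0, hdiv, l0, hl0, hl0s⟩ := hs
  have hsym := hlat.2.2.1
  have hr := hprim.1
  have hsQ : (s : ℚ) ≠ 0 := by exact_mod_cast hs0.ne'
  choose f hf using fun l : L => hdiv l.1 l.2
  have hinj : ∀ a b : ℤ, ((s * a : ℤ) : ℚ) = ((s * b : ℤ) : ℚ) → a = b := by
    intro a b h
    have h2 : s * a = s * b := by exact_mod_cast h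
    exact mul_left_cancel₀ hs0.ne' h2
  let F : L →+ ℤ := AddMonoidHom.mk' f (by
    intro a b
    apply hinj
    rw [← hf, mul_add, Int.cast_add, ← hf, ← hf, Submodule.coe_add, map_add])
  have hF : ∀ l : L, B r l = ((s * F l : ℤ) : ℚ) := hf
  set t : ℤ := F ⟨r, hr⟩ with ht
  have hrt : B r r = ((s * t : ℤ) : ℚ) := hF ⟨r, hr⟩
  have ht0 : t ≠ 0 := by
    intro h
    rw [h] at hrt
    simp at hrt
    exact hne hrt
  have hl1 : F ⟨l0, hl0⟩ = 1 := by
    apply hinj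
    rw [← hF]
    simpa using hl0s
  let g : L →ₗ[ℤ] ZMod t.natAbs :=
    ((Int.castAddHom (ZMod t.natAbs)).comp F).toIntLinearMap
  have hg : ∀ l, g l = ((F l : ℤ) : ZMod t.natAbs) := fun l => rfl
  have hsurj : Function.Surjective g := by
    intro z
    obtain ⟨a, rfl⟩ := ZMod.intCast_surjective z
    refine ⟨a • ⟨l0, hl0⟩, ?_⟩
    rw [hg, map_zsmul, hl1]
    simp
  have hker : LinearMap.ker g =
      Submodule.comap L.subtype (Submodule.span ℤ {r} ⊔ orthCompl B L r) := by
    ext x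
    rw [LinearMap.mem_ker, hg, ZMod.intCast_zmod_eq_zero_iff_dvd, Int.natAbs_dvd,
      Submodule.mem_comap, Submodule.mem_sup]
    constructor
    · rintro ⟨a, ha⟩
      refine ⟨a • r, Submodule.smul_mem _ _ (Submodule.mem_span_singleton_self r),
        (x : V) - a • r, ⟨L.sub_mem x.2 (L.smul_mem a hr), ?_⟩, by simp⟩
      change B ((x : V) - a • r) r = 0
      rw [hsym, map_sub, map_zsmul, hF, ha, hrt]
      push_cast
      simp only [zsmul_eq_mul]
      ring
    · rintro ⟨y, hy, z, ⟨hzL, hz⟩, hyz⟩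
      obtain ⟨a, rfl⟩ := Submodule.mem_span_singleton.1 hy
      have hz' : B z r = 0 := hz
      refine ⟨a, hinj _ _ ?_⟩
      rw [← hF]
      change a • r + z = (x : V) at hyz
      rw [← hyz, map_add, map_zsmul, hsym r z, hz', hrt]
      push_cast
      simp only [zsmul_eq_mul]
      ring
  have hcard : Nat.card
      (↥L ⧸ (Submodule.comap L.subtype (Submodule.span ℤ {r} ⊔ orthCompl B L r)))
      = t.natAbs := by
    rw [← hker, Nat.card_congr (g.quotKerEquivOfSurjective hsurj).toEquiv, Nat.card_zmod]
  rw [hcard]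
  refine ⟨Int.natAbs_pos.2 ht0, ?_⟩
  rw [hrt, Nat.cast_natAbs]
  push_cast
  rw [abs_mul, abs_of_pos (show (0 : ℚ) < s by exact_mod_cast hs0), mul_comm]
end
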